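/- Let Λ be a finite-dimensional algebra over an algebraically closed field and M, N finite-dimensional Λ-modules. If dim Hom_Λ(U, M) = dim Hom_Λ(U, N) for every finite-dimensional indecomposable Λ-module U, then M ≅ N. -/

import Mathlib

/-- The space `Hom_Λ(U, M)` of `Λ`-linear maps, as a `k`-subspace of `U →ₗ[k] M`. -/
def homLambda (k Λ : Type*) [Field k] [Ring Λ] [Algebra k Λ]
    (U M : Type*) [AddCommGroup U] [Module k U] [Module Λ U] [IsScalarTower k Λ U]
    [AddCommGroup M] [Module k M] [Module Λ M] [IsScalarTower k Λ M]
    [SMulCommClass k Λ M] : Submodule k (U →ₗ[k] M) where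
  carrier := {f | ∀ (a : Λ) (x : U), f (a • x) = a • f x}
  add_mem' := by
    intro f g hf hg a x
    simp [hf a x, hg a x]
  zero_mem' := by intro a x; simp
  smul_mem' := by
    intro c f hf a x
    rw [LinearMap.smul_apply, LinearMap.smul_apply, hf a x, smul_comm]

/-- A module is indecomposable: it is nonzero and admits no nontrivial direct sum
decomposition. -/
def IsIndecomposableModule (A M : Type*) [Ring A] [AddCommGroup M] [Module A M] : Prop :=
  (⊤ : Submodule A M) ≠ ⊥ ∧
    ∀ W₁ W₂ : Submodule A M, W₁ ⊔ W₂ = ⊤ → W₁ ⊓ W₂ = ⊥ → W₁ = ⊥ ∨ W₂ = ⊥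

section HomSpaces

variable {k Λ : Type*} [Field k] [Ring Λ] [Algebra k Λ]

/-- `homLambda` agrees with the space of `Λ`-linear maps. -/
def homLambdaEquiv (U M : Type*) [AddCommGroup U] [Module k U] [Module Λ U] [IsScalarTower k Λ U]
    [AddCommGroup M] [Module k M] [Module Λ M] [IsScalarTower k Λ M] :
    homLambda k Λ U M ≃ₗ[k] (U →ₗ[Λ] M) where
  toFun f := { toFun := f.1, map_add' := f.1.map_add, map_smul' := f.2 }
  invFun g := ⟨g.restrictScalars k, fun a x => g.map_smul a x⟩
  map_add' _ _ := rfl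
  map_smul' _ _ := rfl
  left_inv _ := rfl
  right_inv _ := rfl

variable {U V W M N : Type*}
  [AddCommGroup U] [Module Λ U] [AddCommGroup V] [Module Λ V] [AddCommGroup W] [Module Λ W]
  [AddCommGroup M] [Module k M] [Module Λ M] [IsScalarTower k Λ M]
  [AddCommGroup N] [Module k N] [Module Λ N] [IsScalarTower k Λ N]

variable (k) in
theorem finrank_linearMap_congr_right (e : M ≃ₗ[Λ] N) :
    Module.finrank k (U →ₗ[Λ] M) = Module.finrank k (U →ₗ[Λ] N) :=
  LinearEquiv.finrank_eq
    { toFun := fun f => e.toLinearMap ∘ₗ f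
      invFun := fun f => e.symm.toLinearMap ∘ₗ f
      map_add' := fun f g => by ext; simp
      map_smul' := fun c f => by ext; exact LinearMap.map_smul_of_tower e.toLinearMap c _
      left_inv := fun f => by ext; simp
      right_inv := fun f => by ext; simp }

variable (k) in
theorem finrank_linearMap_congr_left (e : U ≃ₗ[Λ] V) :
    Module.finrank k (U →ₗ[Λ] M) = Module.finrank k (V →ₗ[Λ] M) :=
  LinearEquiv.finrank_eq
    { toFun := fun f => f ∘ₗ e.symm.toLinearMap
      invFun := fun f => f ∘ₗ e.toLinearMap
      map_add' := fun f g => by ext; simp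
      map_smul' := fun c f => by ext; simp
      left_inv := fun f => by ext; simp
      right_inv := fun f => by ext; simp }

variable (k M) in
/-- Precomposition with a `Λ`-linear map, as a `k`-linear map. -/
abbrev precomp (f : W →ₗ[Λ] V) : (V →ₗ[Λ] M) →ₗ[k] (W →ₗ[Λ] M) :=
  LinearMap.lcompₛₗ k M (RingHom.id Λ) f

variable [Module k U] [IsScalarTower k Λ U] [Module k V] [IsScalarTower k Λ V]

theorem finiteDimensional_linearMap [FiniteDimensional k U] [FiniteDimensional k M] :
    FiniteDimensional k (U →ₗ[Λ] M) :=
  Module.Finite.equiv (homLambdaEquiv (k := k) U M)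

theorem finiteDimensional_submodule [FiniteDimensional k M] (X : Submodule Λ M) :
    FiniteDimensional k X :=
  Module.Finite.of_injective (X.subtype.restrictScalars k) X.injective_subtype

theorem finiteDimensional_quotient [FiniteDimensional k M] (X : Submodule Λ M) :
    FiniteDimensional k (M ⧸ X) :=
  Module.Finite.of_surjective (X.mkQ.restrictScalars k) X.mkQ_surjective

theorem finrank_submodule_lt [FiniteDimensional k M] {X : Submodule Λ M} (hX : X ≠ ⊤) :
    Module.finrank k X < Module.finrank k M :=
  Submodule.finrank_lt (s := X.restrictScalars k) (by simpa using hX)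

variable (k) in
theorem finrank_linearMap_prod_right [FiniteDimensional k U] [FiniteDimensional k M]
    [FiniteDimensional k N] :
    Module.finrank k (U →ₗ[Λ] M × N) =
      Module.finrank k (U →ₗ[Λ] M) + Module.finrank k (U →ₗ[Λ] N) := by
  have := finiteDimensional_linearMap (k := k) (Λ := Λ) (U := U) (M := M)
  have := finiteDimensional_linearMap (k := k) (Λ := Λ) (U := U) (M := N)
  rw [← Module.finrank_prod]
  exact (LinearMap.prodEquiv k).finrank_eq.symm

variable (k) in
theorem finrank_linearMap_prod_left [FiniteDimensional k U] [FiniteDimensional k V]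
    [FiniteDimensional k M] :
    Module.finrank k (U × V →ₗ[Λ] M) =
      Module.finrank k (U →ₗ[Λ] M) + Module.finrank k (V →ₗ[Λ] M) := by
  have := finiteDimensional_linearMap (k := k) (Λ := Λ) (U := U) (M := M)
  have := finiteDimensional_linearMap (k := k) (Λ := Λ) (U := V) (M := M)
  rw [← Module.finrank_prod]
  exact (LinearMap.coprodEquiv k).finrank_eq.symm

/-- The dimension count given by left exactness of `Hom_Λ(-, M)`. -/
theorem finrank_range_precomp_add [FiniteDimensional k V] [FiniteDimensional k M]
    (f : W →ₗ[Λ] V) :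
    Module.finrank k (LinearMap.range (precomp k M f)) +
      Module.finrank k ((V ⧸ LinearMap.range f) →ₗ[Λ] M) = Module.finrank k (V →ₗ[Λ] M) := by
  have := finiteDimensional_linearMap (k := k) (Λ := Λ) (U := V) (M := M)
  have hinj : Function.Injective (precomp k M (LinearMap.range f).mkQ) := by
    intro g h hgh
    exact LinearMap.cancel_right (Submodule.mkQ_surjective _) |>.1 hgh
  have hexact : LinearMap.range (precomp k M (LinearMap.range f).mkQ) =
      LinearMap.ker (precomp k M f) := by
    ext g
    constructor
    · rintro ⟨h, rfl⟩
      ext w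
      have hw : (LinearMap.range f).mkQ (f w) = 0 :=
        (Submodule.Quotient.mk_eq_zero _).2 (LinearMap.mem_range_self f w)
      exact (congrArg h hw).trans (map_zero h)
    · intro hg
      have hle : LinearMap.range f ≤ LinearMap.ker g := by
        rintro _ ⟨w, rfl⟩
        exact LinearMap.congr_fun hg w
      exact ⟨(LinearMap.range f).liftQ g hle, Submodule.liftQ_mkQ _ _ hle⟩
  rw [← LinearMap.finrank_range_of_inj hinj, hexact, LinearMap.finrank_range_add_finrank_ker]

/-- If every map `W → N` factors through `f` and `M`, `N` have equal Hom dimensions from the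
modules involved, then every map `W → M` factors through `f`. -/
theorem precomp_surjective_of_finrank_eq [Module k W] [IsScalarTower k Λ W]
    [FiniteDimensional k V] [FiniteDimensional k W]
    [FiniteDimensional k M] [FiniteDimensional k N] (f : W →ₗ[Λ] V)
    (hN : Function.Surjective (precomp k N f))
    (hV : Module.finrank k (V →ₗ[Λ] M) = Module.finrank k (V →ₗ[Λ] N))
    (hW : Module.finrank k (W →ₗ[Λ] M) = Module.finrank k (W →ₗ[Λ] N))
    (hC : Module.finrank k ((V ⧸ LinearMap.range f) →ₗ[Λ] M) =
      Module.finrank k ((V ⧸ LinearMap.range f) →ₗ[Λ] N)) :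
    Function.Surjective (precomp k M f) := by
  have := finiteDimensional_linearMap (k := k) (Λ := Λ) (U := W) (M := M)
  rw [← LinearMap.range_eq_top] at hN ⊢
  apply Submodule.eq_top_of_finrank_eq
  have h₁ := finrank_range_precomp_add (k := k) (M := M) f
  have h₂ := finrank_range_precomp_add (k := k) (M := N) f
  rw [hN, finrank_top] at h₂
  omega

end HomSpaces

section Indecomposable

variable {A X : Type*} [Ring A] [AddCommGroup X] [Module A X]

/-- Fitting's lemma. -/
theorem IsIndecomposableModule.isUnit_or_isNilpotent [IsNoetherian A X] [IsArtinian A X]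
    (hX : IsIndecomposableModule A X) (f : Module.End A X) : IsUnit f ∨ IsNilpotent f := by
  obtain ⟨n, hn, hcompl⟩ := ((Filter.eventually_gt_atTop 0).and
    f.eventually_isCompl_ker_pow_range_pow).exists
  rcases hX.2 _ _ hcompl.sup_eq_top hcompl.inf_eq_bot with h | h
  · left
    rw [← isUnit_pow_iff hn.ne', Module.End.isUnit_iff]
    refine ⟨LinearMap.ker_eq_bot.1 h, LinearMap.range_eq_top.1 ?_⟩
    simpa [h] using hcompl.sup_eq_top
  · exact Or.inr ⟨n, LinearMap.range_eq_bot.1 h⟩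

theorem IsIndecomposableModule.isLocalRing_end [IsNoetherian A X] [IsArtinian A X]
    (hX : IsIndecomposableModule A X) : IsLocalRing (Module.End A X) := by
  have : Nontrivial X := by
    by_contra hX'
    rw [not_nontrivial_iff_subsingleton] at hX'
    exact hX.1 (Subsingleton.elim _ _)
  refine IsLocalRing.of_isUnit_or_isUnit_one_sub_self fun f => ?_
  exact (hX.isUnit_or_isNilpotent f).imp_right fun h => h.isUnit_one_sub

theorem IsLocalRing.exists_isUnit_of_isUnit_sum {R ι : Type*} [Ring R] [IsLocalRing R]
    (s : Finset ι) (a : ι → R) (h : IsUnit (∑ i ∈ s, a i)) : ∃ i ∈ s, IsUnit (a i) := by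
  classical
  induction s using Finset.induction_on with
  | empty => simp at h
  | insert i s hi ih =>
    rw [Finset.sum_insert hi] at h
    obtain ⟨u, hu⟩ := h
    have hsum : ↑u⁻¹ * a i + ↑u⁻¹ * ∑ j ∈ s, a j = 1 := by
      rw [← mul_add, ← hu, Units.inv_mul]
    rcases IsLocalRing.isUnit_or_isUnit_of_add_one hsum with h | h
    · exact ⟨i, Finset.mem_insert_self i s, (Units.isUnit_units_mul _ _).1 h⟩
    · obtain ⟨j, hj, hju⟩ := ih ((Units.isUnit_units_mul _ _).1 h)
      exact ⟨j, Finset.mem_insert_of_mem hj, hju⟩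

theorem exists_isCompl_isIndecomposableModule [IsArtinian A X] [Nontrivial X] :
    ∃ P Q : Submodule A X, IsCompl P Q ∧ IsIndecomposableModule A P := by
  obtain ⟨P, ⟨hP, Q, hPQ⟩, hmin⟩ := WellFounded.has_min
    (wellFounded_lt (α := Submodule A X)) {P | P ≠ ⊥ ∧ ∃ Q, IsCompl P Q}
    ⟨⊤, top_ne_bot, ⊥, isCompl_top_bot⟩
  refine ⟨P, Q, hPQ, ?_, fun W₁ W₂ hsup hinf => ?_⟩
  · intro h
    apply hP
    simpa using congrArg (Submodule.map P.subtype) h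
  by_contra! hW
  set R₁ := W₁.map P.subtype
  set R₂ := W₂.map P.subtype with hR₂
  have hR_sup : R₁ ⊔ R₂ = P := by rw [← Submodule.map_sup, hsup]; simp
  have hR_inf : R₁ ⊓ R₂ = ⊥ := by
    rw [← Submodule.map_inf _ P.injective_subtype, hinf, Submodule.map_bot]
  have hne : ∀ W : Submodule A P, W ≠ ⊥ → W.map P.subtype ≠ ⊥ := fun W hW h =>
    hW (Submodule.map_injective_of_injective P.injective_subtype
      (h.trans (Submodule.map_bot _).symm))
  refine hmin R₁ ⟨hne _ hW.1, R₂ ⊔ Q, ?_⟩ (lt_of_le_of_ne (hR_sup ▸ le_sup_left) fun h => ?_)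
  · refine IsCompl.of_eq ?_ (by rw [← sup_assoc, hR_sup, hPQ.sup_eq_top])
    exact (Disjoint.disjoint_sup_right_of_disjoint_sup_left (disjoint_iff.2 hR_inf)
      (hR_sup.symm ▸ hPQ.disjoint)).eq_bot
  · apply hne _ hW.2
    rw [← hR₂, ← hR_inf, h]
    exact (inf_eq_right.2 (hR_sup ▸ le_sup_right)).symm

/-- A map admitting a retraction up to an automorphism splits off a direct summand. -/
theorem nonempty_linearEquiv_prod_ker {N : Type*} [AddCommGroup N] [Module A N]
    (a : X →ₗ[A] N) (b : N →ₗ[A] X) (h : IsUnit (b ∘ₗ a : Module.End A X)) :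
    Nonempty (N ≃ₗ[A] X × LinearMap.ker b) := by
  rw [Module.End.isUnit_iff] at h
  have hcompl : IsCompl (LinearMap.range a) (LinearMap.ker b) := by
    refine IsCompl.of_eq ?_ ?_
    · rw [eq_bot_iff]
      rintro _ ⟨⟨x, rfl⟩, hx⟩
      have : x = 0 := h.1 (by simpa using hx)
      simp [this]
    · rw [eq_top_iff]
      intro y _
      obtain ⟨x, hx⟩ := h.2 (b y)
      refine Submodule.mem_sup.2 ⟨a x, ⟨x, rfl⟩, y - a x, ?_, by simp⟩
      simpa [sub_eq_zero] using hx.symm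
  have ha : Function.Injective a := Function.Injective.of_comp (f := b) h.1
  exact ⟨(Submodule.prodEquivOfIsCompl _ _ hcompl).symm.trans
    ((LinearEquiv.ofInjective a ha).symm.prodCongr (LinearEquiv.refl A _))⟩

end Indecomposable

section Auslander

variable {k Λ : Type*} [Field k] [Ring Λ] [Algebra k Λ]

theorem isNoetherian_of_finiteDimensional (M : Type*) [AddCommGroup M] [Module k M] [Module Λ M]
    [IsScalarTower k Λ M] [FiniteDimensional k M] : IsNoetherian Λ M :=
  isNoetherian_of_tower k inferInstance

theorem isArtinian_of_finiteDimensional (M : Type*) [AddCommGroup M] [Module k M] [Module Λ M]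
    [IsScalarTower k Λ M] [FiniteDimensional k M] : IsArtinian Λ M :=
  isArtinian_of_tower k inferInstance

/-- Equality of Hom dimensions from indecomposable modules extends to all modules. -/
theorem finrank_linearMap_eq_of_indecomposable (M N : Type)
    [AddCommGroup M] [Module k M] [Module Λ M] [IsScalarTower k Λ M] [FiniteDimensional k M]
    [AddCommGroup N] [Module k N] [Module Λ N] [IsScalarTower k Λ N] [FiniteDimensional k N]
    (h : ∀ (U : Type) [AddCommGroup U] [Module k U] [Module Λ U] [IsScalarTower k Λ U]
      [FiniteDimensional k U], IsIndecomposableModule Λ U →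
      Module.finrank k (U →ₗ[Λ] M) = Module.finrank k (U →ₗ[Λ] N))
    (U : Type) [AddCommGroup U] [Module k U] [Module Λ U] [IsScalarTower k Λ U]
    [FiniteDimensional k U] :
    Module.finrank k (U →ₗ[Λ] M) = Module.finrank k (U →ₗ[Λ] N) := by
  induction hn : Module.finrank k U using Nat.strong_induction_on generalizing U with
  | _ n ih =>
    subst hn
    by_cases hU : IsIndecomposableModule Λ U
    · exact h U hU
    by_cases htop : (⊤ : Submodule Λ U) = ⊥
    · have : Subsingleton U :=
        (Submodule.subsingleton_iff Λ).1 (subsingleton_of_bot_eq_top htop.symm)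
      rw [Module.finrank_zero_of_subsingleton, Module.finrank_zero_of_subsingleton]
    obtain ⟨W₁, W₂, hsup, hinf, h₁, h₂⟩ : ∃ W₁ W₂ : Submodule Λ U,
        W₁ ⊔ W₂ = ⊤ ∧ W₁ ⊓ W₂ = ⊥ ∧ W₁ ≠ ⊥ ∧ W₂ ≠ ⊥ := by
      simpa [IsIndecomposableModule, htop] using hU
    have := finiteDimensional_submodule (k := k) W₁
    have := finiteDimensional_submodule (k := k) W₂
    have e := Submodule.prodEquivOfIsCompl W₁ W₂ (IsCompl.of_eq hinf hsup)
    have hW₁ : W₁ ≠ ⊤ := fun h => h₂ (by simpa [h] using hinf)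
    have hW₂ : W₂ ≠ ⊤ := fun h => h₁ (by simpa [h] using hinf)
    rw [← finrank_linearMap_congr_left k e, ← finrank_linearMap_congr_left k e,
      finrank_linearMap_prod_left, finrank_linearMap_prod_left,
      ih _ (finrank_submodule_lt hW₁) W₁ rfl, ih _ (finrank_submodule_lt hW₂) W₂ rfl]

/-- If `M` and `N` have the same Hom dimensions, the identity of `M` is a sum of maps factoring
through `N`. -/
theorem exists_sum_comp_eq_id (M N : Type)
    [AddCommGroup M] [Module k M] [Module Λ M] [IsScalarTower k Λ M] [FiniteDimensional k M]
    [AddCommGroup N] [Module k N] [Module Λ N] [IsScalarTower k Λ N] [FiniteDimensional k N]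
    (h : ∀ (U : Type) [AddCommGroup U] [Module k U] [Module Λ U] [IsScalarTower k Λ U]
      [FiniteDimensional k U],
      Module.finrank k (U →ₗ[Λ] M) = Module.finrank k (U →ₗ[Λ] N)) :
    ∃ (n : ℕ) (f : Fin n → M →ₗ[Λ] N) (g : Fin n → N →ₗ[Λ] M),
      ∑ i, g i ∘ₗ f i = LinearMap.id := by
  have := finiteDimensional_linearMap (k := k) (Λ := Λ) (U := M) (M := N)
  obtain ⟨n, ⟨B⟩⟩ : ∃ n : ℕ, Nonempty (Module.Basis (Fin n) k (M →ₗ[Λ] N)) :=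
    ⟨_, ⟨Module.finBasis k (M →ₗ[Λ] N)⟩⟩
  let F : M →ₗ[Λ] (Fin n → N) := LinearMap.pi B
  have hF : Function.Surjective (precomp k N F) := by
    intro g
    refine ⟨∑ i, B.repr g i • LinearMap.proj i, ?_⟩
    ext m
    have hm := LinearMap.congr_fun (B.sum_repr g) m
    rw [LinearMap.sum_apply] at hm
    simpa [F, LinearMap.lcompₛₗ_apply, -Module.Basis.sum_repr] using hm
  have : FiniteDimensional k ((Fin n → N) ⧸ LinearMap.range F) :=
    finiteDimensional_quotient (LinearMap.range F)
  obtain ⟨G, hG⟩ := precomp_surjective_of_finrank_eq F hF (h (Fin n → N)) (h M)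
    (h ((Fin n → N) ⧸ LinearMap.range F)) LinearMap.id
  refine ⟨n, B, fun i => G ∘ₗ LinearMap.single Λ (fun _ => N) i, ?_⟩
  ext m
  have hm : G (F m) = m := LinearMap.congr_fun hG m
  have hsum := congrArg G (Finset.univ_sum_single (F m))
  rw [map_sum, hm] at hsum
  simpa [F] using hsum

/-- Modules with equal Hom dimensions from all finite-dimensional modules are isomorphic. -/
theorem nonempty_linearEquiv_of_finrank_linearMap_eq (M N : Type)
    [AddCommGroup M] [Module k M] [Module Λ M] [IsScalarTower k Λ M] [FiniteDimensional k M]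
    [AddCommGroup N] [Module k N] [Module Λ N] [IsScalarTower k Λ N] [FiniteDimensional k N]
    (h : ∀ (U : Type) [AddCommGroup U] [Module k U] [Module Λ U] [IsScalarTower k Λ U]
      [FiniteDimensional k U],
      Module.finrank k (U →ₗ[Λ] M) = Module.finrank k (U →ₗ[Λ] N)) :
    Nonempty (M ≃ₗ[Λ] N) := by
  induction hn : Module.finrank k M using Nat.strong_induction_on generalizing M N with
  | _ n ih =>
    subst hn
    rcases subsingleton_or_nontrivial M with hM | hM
    · have := finiteDimensional_linearMap (k := k) (Λ := Λ) (U := N) (M := N)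
      have hNN : Subsingleton (N →ₗ[Λ] N) := by
        rw [← Module.finrank_zero_iff (R := k), ← h N, Module.finrank_zero_of_subsingleton]
      have : Subsingleton N := ⟨fun x y => by
        have h0 : (LinearMap.id : N →ₗ[Λ] N) = 0 := Subsingleton.elim _ _
        rw [← LinearMap.id_apply (R := Λ) x, ← LinearMap.id_apply (R := Λ) y, h0]
        simp⟩
      exact ⟨0⟩
    have := isArtinian_of_finiteDimensional (k := k) (Λ := Λ) M
    obtain ⟨X, Y, hXY, hX⟩ := exists_isCompl_isIndecomposableModule (A := Λ) (X := M)
    have := finiteDimensional_submodule (k := k) X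
    have := finiteDimensional_submodule (k := k) Y
    have := isArtinian_of_finiteDimensional (k := k) (Λ := Λ) X
    have := isNoetherian_of_finiteDimensional (k := k) (Λ := Λ) X
    have := hX.isLocalRing_end
    obtain ⟨r, f, g, hfg⟩ := exists_sum_comp_eq_id M N h
    let π := X.projectionOnto Y hXY
    have hsum : ∑ i, ((π ∘ₗ g i) ∘ₗ (f i ∘ₗ X.subtype) : Module.End Λ X) = 1 := by
      ext x
      have hx := congrArg π (LinearMap.congr_fun hfg x)
      simpa [π] using congrArg Subtype.val hx
    obtain ⟨i, -, hi⟩ := IsLocalRing.exists_isUnit_of_isUnit_sum Finset.univ _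
      (hsum ▸ isUnit_one)
    obtain ⟨eN⟩ := nonempty_linearEquiv_prod_ker _ _ hi
    have := finiteDimensional_submodule (k := k) (LinearMap.ker (π ∘ₗ g i))
    have eM := (Submodule.prodEquivOfIsCompl X Y hXY).symm
    have hY : Y ≠ ⊤ := by
      rintro rfl
      have hXbot : X = ⊥ := by simpa using hXY.inf_eq_bot
      subst hXbot
      exact hX.1 (Subsingleton.elim _ _)
    obtain ⟨e⟩ := ih _ (finrank_submodule_lt hY) Y (LinearMap.ker (π ∘ₗ g i)) (by
      intro U _ _ _ _ _
      have hU := h U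
      rw [finrank_linearMap_congr_right k eM, finrank_linearMap_congr_right k eN,
        finrank_linearMap_prod_right, finrank_linearMap_prod_right] at hU
      exact Nat.add_left_cancel hU) rfl
    exact ⟨eM.trans (((LinearEquiv.refl Λ X).prodCongr e).trans eN.symm)⟩

end Auslander

/-- (Auslander.)  Let `Λ` be a finite-dimensional algebra over an algebraically closed
field `k` and let `M`, `N` be finite-dimensional `Λ`-modules.  If
`dim Hom_Λ(U, M) = dim Hom_Λ(U, N)` for every finite-dimensional indecomposable
`Λ`-module `U`, then `M ≅ N`. -/
theorem auslander_hom_dim_determines_module {k : Type*} [Field k] [IsAlgClosed k]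
    {Λ : Type*} [Ring Λ] [Algebra k Λ] [FiniteDimensional k Λ]
    (M N : Type) [AddCommGroup M] [Module k M] [Module Λ M] [IsScalarTower k Λ M]
    [SMulCommClass k Λ M] [FiniteDimensional k M]
    [AddCommGroup N] [Module k N] [Module Λ N] [IsScalarTower k Λ N]
    [SMulCommClass k Λ N] [FiniteDimensional k N]
    (h : ∀ (U : Type) [AddCommGroup U] [Module k U] [Module Λ U] [IsScalarTower k Λ U]
      [SMulCommClass k Λ U] [FiniteDimensional k U], IsIndecomposableModule Λ U →
      Module.finrank k (homLambda k Λ U M) = Module.finrank k (homLambda k Λ U N)) :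
    Nonempty (M ≃ₗ[Λ] N) := by
  exact nonempty_linearEquiv_of_finrank_linearMap_eq M N <|
    finrank_linearMap_eq_of_indecomposable M N fun U _ _ _ _ _ hU => by
      rw [← (homLambdaEquiv (k := k) U M).finrank_eq, ← (homLambdaEquiv (k := k) U N).finrank_eq]
      exact h U hU
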